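/- Let α_1, …, α_n ∈ CN^1(𝔛) be Cartier classes, let 0 ≤ p ≤ n, and suppose α_i is nef for i ≤ p and that ω ∈ CN^1(𝔛) is a nef class such that ω + α_i and ω − α_i are nef for each i > p. Then |(α_1 ⋯ α_n)| ≤ C_n (α_1 ⋯ α_p · ω^{n−p}) for some constant C_n depending only on n, where (·) denotes the top intersection number in N^n(𝔛) ≅ ℝ. -/

import Mathlib

/-!
The bound holds with constant `1`. For each slot `i` that is to be replaced, put
`β i = ω + α i` and `γ i = ω - α i`, both nef, so that `α i = (β i - γ i) / 2` and
`ω = (β i + γ i) / 2`. Expanding by multilinearity, the two intersection numbers are signed and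
unsigned sums of the same products of nef classes; these are nonnegative, hence
`|(α_1 ⋯ α_n)| ≤ (α_1 ⋯ α_p · ω^(n-p))`. The lemma `MultilinearMap.abs_le_piecewise` performs this
expansion one slot at a time, for any multilinear form that is nonnegative on a set of vectors.
-/

/-!
Abstract model of the numerical classes on the Riemann–Zariski space `𝔛 = proj lim X_π`
of a normal projective variety `X` of dimension `n = m + 1` over an algebraically closed
field of characteristic zero.

* `C` models the space `CN¹(𝔛)` of Cartier classes of codimension 1 (the inductive limit
  of the Néron–Severi spaces `N¹(X_π)` under pull-back), with its strong topology.
* `W p` models the space `N^p(𝔛)` of Weil classes of codimension `p` (the projective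
  limit of the `N^p(X_π)` under push-forward), with its weak topology; `CN^p(𝔛)` injects
  into it, and `psef p ⊆ W p` is the cone of pseudo-effective Weil classes (those all of
  whose incarnations are pseudo-effective); it is a strict closed convex cone.
* `inter p` is the intersection product of `p` Cartier classes (computed in a common
  determination), viewed in `W p`; it is multilinear and symmetric, and products of nef
  classes are psef.
* `nefC`, `psefC`, `bigC` are the nef, psef and big cones of `CN¹(𝔛)` (a Cartier class
  being nef/psef/big if some determination is); `effQ` is the set of classes of effective
  Cartier ℚ-divisors on `𝔛`.
* `toReal` identifies the top space `N^(m+1)(𝔛)` with `ℝ`, and `pair` is the extension of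
  the intersection product to a pairing `CN¹(𝔛) × N^m(𝔛) → ℝ` via the projection formula.
* `posProd p f` is the positive intersection product `⟨f 0 ⋯ f (p-1)⟩ ∈ N^p(𝔛)`: for big
  classes it is the least upper bound, with respect to the psef order on `W p`, of the
  classes `(f 0 − D 0)⋯(f (p-1) − D (p-1))` over all effective Cartier ℚ-divisors `D i`
  with `f i − D i` nef; for psef classes it is the decreasing limit
  `lim_{ε→0+} ⟨(f 0 + εω)⋯(f (p-1) + εω)⟩` for any big class `ω`.
-/
structure RiemannZariski (m : ℕ) (C : Type*) (W : ℕ → Type*)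
    [AddCommGroup C] [Module ℝ C] [TopologicalSpace C]
    [∀ p, AddCommGroup (W p)] [∀ p, Module ℝ (W p)] [∀ p, TopologicalSpace (W p)] where
  /-- the psef cone of `N^p(𝔛)`: a strict closed convex cone -/
  psef : ∀ p, Set (W p)
  psef_closed : ∀ p, IsClosed (psef p)
  psef_add : ∀ p, ∀ x ∈ psef p, ∀ y ∈ psef p, x + y ∈ psef p
  psef_smul : ∀ p (c : ℝ), 0 ≤ c → ∀ x ∈ psef p, c • x ∈ psef p
  psef_strict : ∀ p x, x ∈ psef p → -x ∈ psef p → x = 0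
  /-- the intersection product of `p` Cartier classes, as a Weil class in `N^p(𝔛)` -/
  inter : ∀ p, (Fin p → C) → W p
  inter_update_add : ∀ p (f : Fin p → C) (i : Fin p) (x y : C),
    inter p (Function.update f i (x + y)) =
      inter p (Function.update f i x) + inter p (Function.update f i y)
  inter_update_smul : ∀ p (f : Fin p → C) (i : Fin p) (c : ℝ) (x : C),
    inter p (Function.update f i (c • x)) = c • inter p (Function.update f i x)
  inter_symm : ∀ p (σ : Equiv.Perm (Fin p)) (f : Fin p → C),
    inter p (fun i => f (σ i)) = inter p f
  inter_continuous : ∀ p, Continuous fun f : Fin p → C => inter p f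
  /-- the nef cone of `CN¹(𝔛)` -/
  nefC : Set C
  /-- the psef cone of `CN¹(𝔛)` -/
  psefC : Set C
  /-- the big cone of `CN¹(𝔛)` -/
  bigC : Set C
  /-- classes of effective Cartier ℚ-divisors on `𝔛` -/
  effQ : Set C
  nefC_subset : nefC ⊆ psefC
  effQ_subset : effQ ⊆ psefC
  nefC_closed : IsClosed nefC
  nefC_add : ∀ x ∈ nefC, ∀ y ∈ nefC, x + y ∈ nefC
  nefC_smul : ∀ (c : ℝ), 0 ≤ c → ∀ x ∈ nefC, c • x ∈ nefC
  psefC_closed : IsClosed psefC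
  psefC_add : ∀ x ∈ psefC, ∀ y ∈ psefC, x + y ∈ psefC
  psefC_smul : ∀ (c : ℝ), 0 ≤ c → ∀ x ∈ psefC, c • x ∈ psefC
  /-- the big cone is the interior of the psef cone -/
  bigC_eq : bigC = interior psefC
  /-- a Cartier class is psef iff it is psef as a Weil class (via the injection `C → W 1`) -/
  psefC_eq : psefC = {a : C | inter 1 (fun _ => a) ∈ psef 1}
  /-- intersection products of nef Cartier classes are pseudo-effective -/
  inter_nef_psef : ∀ p (f : Fin p → C), (∀ i, f i ∈ nefC) → inter p f ∈ psef p
  /-- identification of the top space `N^(m+1)(𝔛)` with `ℝ` -/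
  toReal : W (m + 1) ≃ₗ[ℝ] ℝ
  toReal_psef : ∀ x, x ∈ psef (m + 1) ↔ 0 ≤ toReal x
  /-- the pairing `CN¹(𝔛) × N^m(𝔛) → ℝ` extending the intersection product by the
  projection formula -/
  pair : C → W m → ℝ
  pair_add_left : ∀ x y w, pair (x + y) w = pair x w + pair y w
  pair_smul_left : ∀ (c : ℝ) x w, pair (c • x) w = c * pair x w
  pair_add_right : ∀ x w w', pair x (w + w') = pair x w + pair x w'
  pair_smul_right : ∀ x (c : ℝ) w, pair x (c • w) = c * pair x w
  pair_inter : ∀ (γ : C) (f : Fin m → C),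
    pair γ (inter m f) = toReal (inter (m + 1) (Fin.cons γ f))
  /-- nef Cartier classes pair nonnegatively with psef Weil classes -/
  pair_nonneg : ∀ γ ∈ nefC, ∀ w ∈ psef m, 0 ≤ pair γ w
  /-- the positive intersection product `⟨f 0 ⋯ f (p-1)⟩ ∈ N^p(𝔛)` -/
  posProd : ∀ p, (Fin p → C) → W p
  /-- for big classes, `posProd` is an upper bound of the products
  `(f 0 − D 0)⋯(f (p-1) − D (p-1))` over effective Cartier ℚ-divisors with `f i − D i` nef -/
  posProd_big_ub : ∀ p (f : Fin p → C), (∀ i, f i ∈ bigC) →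
    ∀ D : Fin p → C, (∀ i, D i ∈ effQ) → (∀ i, f i - D i ∈ nefC) →
      posProd p f - inter p (fun i => f i - D i) ∈ psef p
  /-- for big classes, `posProd` is the least such upper bound (for the psef order) -/
  posProd_big_lub : ∀ p (f : Fin p → C), (∀ i, f i ∈ bigC) →
    ∀ u : W p, (∀ D : Fin p → C, (∀ i, D i ∈ effQ) → (∀ i, f i - D i ∈ nefC) →
      u - inter p (fun i => f i - D i) ∈ psef p) → u - posProd p f ∈ psef p
  /-- for psef classes, `posProd` is the limit of the positive products of the `f i + εω`
  as `ε → 0+`, for any big class `ω` -/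
  posProd_psef_limit : ∀ p (f : Fin p → C), (∀ i, f i ∈ psefC) → ∀ ω ∈ bigC,
    Filter.Tendsto (fun ε : ℝ => posProd p (fun i => f i + ε • ω))
      (nhdsWithin 0 (Set.Ioi 0)) (nhds (posProd p f))

/-- Let `L` be a multilinear form that is nonnegative on families with values in `N`. If `f i ∈ N`
off `s` and `ω ± f i ∈ N` on `s`, then replacing `f` by `ω` on `s` bounds `|L f|`. -/
theorem MultilinearMap.abs_le_piecewise {ι C : Type*} [DecidableEq ι] [AddCommGroup C] [Module ℝ C]
    (L : MultilinearMap ℝ (fun _ : ι => C) ℝ) (N : Set C)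
    (hL : ∀ f : ι → C, (∀ i, f i ∈ N) → 0 ≤ L f) (ω : C) (s : Finset ι) :
    ∀ f : ι → C, (∀ i, i ∉ s → f i ∈ N) → (∀ i ∈ s, ω + f i ∈ N ∧ ω - f i ∈ N) →
      |L f| ≤ L (s.piecewise (fun _ => ω) f) := by
  induction s using Finset.induction_on with
  | empty =>
    intro f hf _
    simpa using (abs_of_nonneg (hL f fun i => hf i (by simp))).le
  | insert a s ha ih =>
    intro f hf hs
    have key : ∀ x ∈ N, |L (Function.update f a x)| ≤
        L (Function.update (s.piecewise (fun _ => ω) f) a x) := by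
      intro x hx
      rw [Finset.update_piecewise_of_notMem _ _ _ ha]
      apply ih
      · intro i hi
        by_cases h : i = a
        · subst h; simpa using hx
        · simpa [h] using hf i (by simp [h, hi])
      · intro i hi
        have h : i ≠ a := fun h => ha (h ▸ hi)
        simpa [h] using hs i (by simp [hi])
    obtain ⟨h1, h2⟩ := hs a (by simp)
    have k1 := key _ h1
    have k2 := key _ h2
    rw [Finset.piecewise_insert]
    simp only [L.map_update_add, L.map_update_sub, Function.update_eq_self] at k1 k2
    -- The terms in which slot `a` of the replaced family is `f a` cancel between `k1` and `k2`.
    rw [abs_le] at *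
    constructor <;> linarith

/-- The top intersection number, as a multilinear form in its Cartier classes. -/
def RiemannZariski.topForm {m : ℕ} {C : Type*} {W : ℕ → Type*}
    [AddCommGroup C] [Module ℝ C] [TopologicalSpace C]
    [∀ p, AddCommGroup (W p)] [∀ p, Module ℝ (W p)] [∀ p, TopologicalSpace (W p)]
    (S : RiemannZariski m C W) : MultilinearMap ℝ (fun _ : Fin (m + 1) => C) ℝ where
  toFun f := S.toReal (S.inter (m + 1) f)
  -- `convert` identifies the arbitrary decidable equality with the standard one on `Fin (m + 1)`.
  map_update_add' f i x y := by
    rw [← map_add]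
    convert congrArg S.toReal (S.inter_update_add (m + 1) f i x y)
  map_update_smul' f i c x := by
    rw [← map_smul]
    convert congrArg S.toReal (S.inter_update_smul (m + 1) f i c x)

/-!
STATEMENT 10 (Corollary): for every `n = m + 1` there is a constant `C_n`, depending only
on `n`, such that for all Cartier classes `α_1, …, α_n ∈ CN¹(𝔛)`, every `0 ≤ p ≤ n` with
`α_i` nef for `i ≤ p`, and every nef class `ω ∈ CN¹(𝔛)` with `ω + α_i` and `ω − α_i` nef
for each `i > p`, one has `|(α_1 ⋯ α_n)| ≤ C_n (α_1 ⋯ α_p · ω^(n-p))`, where `(·)` is the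
top intersection number via `N^n(𝔛) ≅ ℝ`.
-/
theorem uniform_intersection_bound (m : ℕ) :
    ∃ Cn : ℝ, ∀ (C : Type*) (W : ℕ → Type*)
      [AddCommGroup C] [Module ℝ C] [TopologicalSpace C]
      [∀ p, AddCommGroup (W p)] [∀ p, Module ℝ (W p)] [∀ p, TopologicalSpace (W p)]
      (S : RiemannZariski m C W)
      (p : ℕ), p ≤ m + 1 → ∀ (α : Fin (m + 1) → C) (ω : C),
      (∀ i : Fin (m + 1), (i : ℕ) < p → α i ∈ S.nefC) →
      ω ∈ S.nefC →
      (∀ i : Fin (m + 1), p ≤ (i : ℕ) → ω + α i ∈ S.nefC ∧ ω - α i ∈ S.nefC) →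
      |S.toReal (S.inter (m + 1) α)| ≤
        Cn * S.toReal (S.inter (m + 1) (fun i => if (i : ℕ) < p then α i else ω)) := by
  refine ⟨1, ?_⟩
  intro C W _ _ _ _ _ _ S p _ α ω hnef _ hω
  have h := S.topForm.abs_le_piecewise S.nefC
    (fun f hf => (S.toReal_psef _).1 (S.inter_nef_psef _ f hf)) ω
    (Finset.univ.filter fun i : Fin (m + 1) => p ≤ (i : ℕ)) α
    (fun i hi => hnef i (by simpa using hi)) (fun i hi => hω i (by simpa using hi))
  have e : (Finset.univ.filter fun i : Fin (m + 1) => p ≤ (i : ℕ)).piecewise (fun _ => ω) α =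
      fun i : Fin (m + 1) => if (i : ℕ) < p then α i else ω := by
    ext i
    by_cases hi : (i : ℕ) < p
    · simp [Finset.piecewise, hi]
    · simp [Finset.piecewise, hi, not_lt.1 hi]
  rw [e] at h
  rw [one_mul]
  exact h
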